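/- Local Markov property for E-separation: for every directed graph G = (V, E_d) and every node v ∈ V, the triple (V \ pa_G(scc_G(v)), scc_G(v), pa_G(scc_G(v))) belongs to I_E^G, i.e., the strongly connected component of v is E-separated from everything outside the parents of the component, given those parents. -/

import Mathlib

namespace ESepPaper

/-- A directed mixed graph: directed edges and bidirected edges over a node type `V`.
A directed graph (DG) is a DMG with `Ebi = ∅`. -/
structure DMG (V : Type) where
  Ed : Set (V × V)
  Ebi : Set (Sym2 V)

variable {V : Type}

/-- `G.ancestor u v` : there is a directed path `u → … → v` (possibly trivial). -/
def DMG.ancestor (G : DMG V) : V → V → Prop :=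
  Relation.ReflTransGen (fun u v => (u, v) ∈ G.Ed)

/-- Ancestors of a set `C`. -/
def DMG.anc (G : DMG V) (C : Set V) : Set V := {u | ∃ v ∈ C, G.ancestor u v}

/-- Strongly connected component of `v`. -/
def DMG.scc (G : DMG V) (v : V) : Set V := {w | G.ancestor w v ∧ G.ancestor v w}

/-- Parents of a set of nodes. -/
def DMG.pa (G : DMG V) (S : Set V) : Set V := {w | ∃ v ∈ S, (w, v) ∈ G.Ed}

/-- Kind of a traversed edge on a walk: forward directed, backward directed, or bidirected. -/
inductive LinkType | fwd | bwd | bi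
deriving DecidableEq

/-- Validity of a link of kind `t` between consecutive walk nodes `u` and `v`. -/
def DMG.linkOK (G : DMG V) (u v : V) : LinkType → Prop
  | .fwd => (u, v) ∈ G.Ed
  | .bwd => (v, u) ∈ G.Ed
  | .bi => s(u, v) ∈ G.Ebi

/-- Arrowhead at the second (right) endpoint of the link. -/
def LinkType.headR : LinkType → Prop
  | .fwd => True
  | .bwd => False
  | .bi => True

/-- Arrowhead at the first (left) endpoint of the link. -/
def LinkType.headL : LinkType → Prop
  | .fwd => False
  | .bwd => True
  | .bi => True

/-- Tail at the second (right) endpoint. -/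
def LinkType.tailR (t : LinkType) : Prop := t = .bwd

/-- Tail at the first (left) endpoint. -/
def LinkType.tailL (t : LinkType) : Prop := t = .fwd

/-- Walks in a DMG. -/
inductive DMG.Walk (G : DMG V) : V → V → Type
  | nil (v : V) : DMG.Walk G v v
  | cons {u v w : V} (t : LinkType) (h : G.linkOK u v t) (p : DMG.Walk G v w) : DMG.Walk G u w

/-- An interior node on a walk, whose incoming link is `t1` and outgoing link is `t2`,
is a collider iff both links have an arrowhead at it. -/
def colliderAt (t1 t2 : LinkType) : Prop := t1.headR ∧ t2.headL

/-- An interior non-collider `v` between neighbours `u` (incoming link `t1`) and `w`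
(outgoing link `t2`) is unblockable: on every side where the link has a tail at `v`, the
corresponding neighbour lies in `scc_G(v)` (left-chain/right-chain/fork cases). -/
def unblockableAt (G : DMG V) (u v w : V) (t1 t2 : LinkType) : Prop :=
  (t1.tailR → u ∈ G.scc v) ∧ (t2.tailL → w ∈ G.scc v)

namespace DMG.Walk

variable {G : DMG V}

/-- First node of a walk. -/
def first {a b : V} (_ : G.Walk a b) : V := a

def length : {a b : V} → G.Walk a b → ℕ
  | _, _, .nil _ => 0
  | _, _, .cons _ _ p => p.length + 1

def support : {a b : V} → G.Walk a b → List V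
  | a, _, .nil _ => [a]
  | a, _, .cons _ _ p => a :: p.support

/-- Auxiliary: σ-openness of the remainder of a walk, where `u` is the previous node and
`t1` the link from `u` into the current first node. -/
def sigmaOpenAux (C : Set V) : (u : V) → LinkType → {b c : V} → G.Walk b c → Prop
  | _, _, _, _, .nil _ => True
  | u, t1, v, _, .cons t2 _ q =>
      ((colliderAt t1 t2 → v ∈ G.anc C) ∧
       (¬ colliderAt t1 t2 → ¬ unblockableAt G u v q.first t1 t2 → v ∉ C)) ∧
      sigmaOpenAux C v t2 q

/-- The walk is σ-open given `C`: every collider on it is an ancestor of a node of `C`, and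
no blockable non-collider on it lies in `C`. -/
def sigmaOpen (C : Set V) : {a b : V} → G.Walk a b → Prop
  | _, _, .nil _ => True
  | a, _, .cons t _ q => sigmaOpenAux C a t q

/-- All links are forward directed. -/
def IsDirected : {a b : V} → G.Walk a b → Prop
  | _, _, .nil _ => True
  | _, _, .cons t _ p => t = .fwd ∧ p.IsDirected

/-- Interior nodes of the walk (all nodes except the two endpoints). -/
def interior {a b : V} (p : G.Walk a b) : List V := p.support.tail.dropLast

/-- Arrowhead at the first endpoint. -/
def headAtStart : {a b : V} → G.Walk a b → Prop
  | _, _, .nil _ => False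
  | _, _, .cons t _ _ => t.headL

def headAtEndAux : LinkType → {a b : V} → G.Walk a b → Prop
  | t, _, _, .nil _ => t.headR
  | _, _, _, .cons t _ q => headAtEndAux t q

/-- Arrowhead at the last endpoint. -/
def headAtEnd : {a b : V} → G.Walk a b → Prop
  | _, _, .nil _ => False
  | _, _, .cons t _ q => headAtEndAux t q

def noCollidersAux : LinkType → {a b : V} → G.Walk a b → Prop
  | _, _, _, .nil _ => True
  | t1, _, _, .cons t2 _ q => ¬ colliderAt t1 t2 ∧ noCollidersAux t2 q

/-- There is no collider on the walk. -/
def NoColliders : {a b : V} → G.Walk a b → Prop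
  | _, _, .nil _ => True
  | _, _, .cons t _ q => noCollidersAux t q

def collidersInAux (S : Set V) : LinkType → {a b : V} → G.Walk a b → Prop
  | _, _, _, .nil _ => True
  | t1, v, _, .cons t2 _ q => (colliderAt t1 t2 → v ∈ S) ∧ collidersInAux S t2 q

/-- Every collider on the walk lies in `S`. -/
def CollidersIn (S : Set V) : {a b : V} → G.Walk a b → Prop
  | _, _, .nil _ => True
  | _, _, .cons t _ q => collidersInAux S t q

def noncollUnblAux : (u : V) → LinkType → {b c : V} → G.Walk b c → Prop
  | _, _, _, _, .nil _ => True
  | u, t1, v, _, .cons t2 _ q =>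
      (¬ colliderAt t1 t2 → unblockableAt G u v q.first t1 t2) ∧ noncollUnblAux v t2 q

/-- Every interior non-collider on the walk is unblockable. -/
def NoncollidersUnblockable : {a b : V} → G.Walk a b → Prop
  | _, _, .nil _ => True
  | a, _, .cons t _ q => noncollUnblAux a t q

/-- The set of edges occurring on a walk (directed edges as ordered pairs in `E_d`,
bidirected edges as unordered pairs). -/
def edges : {a b : V} → G.Walk a b → Set ((V × V) ⊕ Sym2 V)
  | _, _, .nil _ => ∅
  | a, _, .cons t _ p =>
      insert (match t with
        | .fwd => Sum.inl (a, p.first)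
        | .bwd => Sum.inl (p.first, a)
        | .bi => Sum.inr s(a, p.first)) p.edges

/-- Concatenation of walks. -/
def append : {a b c : V} → G.Walk a b → G.Walk b c → G.Walk a c
  | _, _, _, .nil _, q => q
  | _, _, _, .cons t h p, q => .cons t h (p.append q)

/-- A walk `v_0, …, v_{n+1}` is a path if no node besides the final endpoint occurs more
than once, i.e. `v_0, …, v_n` are pairwise distinct. -/
def IsPath {a b : V} (p : G.Walk a b) : Prop := p.support.dropLast.Nodup

end DMG.Walk

/-- `A` is σ-separated from `B` given `C` in `G`: every walk from a node of `A` to a node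
of `B` is σ-blocked given `C`. -/
def DMG.sigmaSep (G : DMG V) (A B C : Set V) : Prop :=
  ∀ a ∈ A, ∀ b ∈ B, ∀ p : G.Walk a b, ¬ p.sigmaOpen C

/-- The lifted dependency graph of `G`, on two copies of `V`
(`Sum.inl` is the past copy `V_0`, `Sum.inr` the future copy `V_1`). -/
def DMG.lift (G : DMG V) : DMG (V ⊕ V) where
  Ed := {e | ∃ u v, (u, v) ∈ G.Ed ∧
        (e = (Sum.inl u, Sum.inl v) ∨ e = (Sum.inl u, Sum.inr v) ∨
         e = (Sum.inr u, Sum.inr v))}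
  Ebi := {e | ∃ u v, s(u, v) ∈ G.Ebi ∧
        (e = s(Sum.inl u, Sum.inl v) ∨ e = s(Sum.inl u, Sum.inr v) ∨
         e = s(Sum.inr u, Sum.inl v) ∨ e = s(Sum.inr u, Sum.inr v))}

/-- `B` is E-separated from `A` given `C` in `G`:
`A_0` is σ-separated from `B_1` given `C_0 ∪ (C_1 \ B_1)` in the lifted dependency graph. -/
def DMG.ESep (G : DMG V) (A B C : Set V) : Prop :=
  G.lift.sigmaSep (Sum.inl '' A) (Sum.inr '' B)
    ((Sum.inl '' C) ∪ ((Sum.inr '' C) \ (Sum.inr '' B)))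

/-- The independence model `I_E^G` of E-separation triples. -/
def DMG.IE (G : DMG V) : Set (Set V × Set V × Set V) :=
  {t | G.ESep t.1 t.2.1 t.2.2}


/-- The latent projection of `G` onto the observed nodes `O`: a directed edge when there is
a non-trivial directed walk whose interior nodes are all latent, and a bidirected edge when
there is a non-trivial collider-free walk with arrowheads at both endpoints whose interior
nodes are all latent. -/
def DMG.latentProj (G : DMG V) (O : Set V) : DMG O where
  Ed := {e | ∃ p : G.Walk e.1.val e.2.val,
          p.IsDirected ∧ 0 < p.length ∧ ∀ x ∈ p.interior, x ∉ O}
  Ebi := {e | ∃ u v : O, e = s(u, v) ∧ ∃ p : G.Walk u.val v.val,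
          p.headAtStart ∧ p.headAtEnd ∧ p.NoColliders ∧ 0 < p.length ∧
          ∀ x ∈ p.interior, x ∉ O}

/-- The last edge of the walk `p` before entering `scc_G(w)` has an arrowhead at its
endpoint in `scc_G(w)` (vacuous if the walk never leaves `scc_G(w)`). -/
def DMG.lastEdgeInto (G : DMG V) {a b : V} (w : V) (p : G.Walk a b) : Prop :=
  (∀ x ∈ p.support, x ∈ G.scc w) ∨
  ∃ (x y : V) (t : LinkType) (h : G.linkOK x y t) (p₁ : G.Walk a x) (p₂ : G.Walk y b),
    p = p₁.append (.cons t h p₂) ∧ x ∉ G.scc w ∧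
    (∀ z ∈ p₂.support, z ∈ G.scc w) ∧ t.headR

/-- An (asymmetric) inducing path from `v` to `w`: a non-trivial path such that every
collider on it is an ancestor of `v` or `w`, every interior non-collider is unblockable,
and the last edge before entering `scc_G(w)` points into `scc_G(w)`. -/
def DMG.IsInducingPath (G : DMG V) {v w : V} (p : G.Walk v w) : Prop :=
  0 < p.length ∧ p.IsPath ∧
  p.CollidersIn (G.anc {v, w}) ∧ p.NoncollidersUnblockable ∧ G.lastEdgeInto w p

theorem lift_anc_proj (G : DMG V) {x y : V ⊕ V} (h : G.lift.ancestor x y) :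
    G.ancestor (Sum.elim id id x) (Sum.elim id id y) := by
  unfold DMG.ancestor at *
  induction h with
  | refl => exact .refl
  | tail _ hb ih =>
    refine ih.tail ?_
    obtain ⟨u, w, hE, h | h | h⟩ := hb <;>
      · obtain ⟨rfl, rfl⟩ := Prod.mk.inj h
        exact hE

theorem lift_anc_inr (G : DMG V) {a : V} {y : V ⊕ V} (h : G.lift.ancestor (Sum.inr a) y) :
    ∃ b, y = Sum.inr b := by
  unfold DMG.ancestor at h
  induction h with
  | refl => exact ⟨a, rfl⟩
  | tail _ hb ih =>
    obtain ⟨b, rfl⟩ := ih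
    obtain ⟨u, w, hE, h | h | h⟩ := hb <;> simp_all

theorem collider_contra (G : DMG V) (v y : V) (hvy : G.ancestor v y) (hy : y ∉ G.scc v)
    (h : Sum.inr y ∈ G.lift.anc ((Sum.inl '' G.pa (G.scc v)) ∪
      ((Sum.inr '' G.pa (G.scc v)) \ (Sum.inr '' G.scc v)))) : False := by
  obtain ⟨c, hc, hyc⟩ := h
  obtain ⟨b, rfl⟩ := lift_anc_inr G hyc
  have h1 := lift_anc_proj G hyc
  simp only [Sum.elim_inr, id] at h1
  rcases hc with ⟨z, _, hz⟩ | ⟨⟨z, ⟨s, hs, hzs⟩, hz⟩, _⟩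
  · cases hz
  · cases hz
    exact hy ⟨h1.trans ((Relation.ReflTransGen.single hzs).trans hs.1), hvy⟩

theorem walk_blocked (G : DMG V) (hG : G.Ebi = ∅) (v : V) {b c : V ⊕ V} (q : G.lift.Walk b c) :
    ∀ (u : V ⊕ V) (t1 : LinkType), c ∈ Sum.inr '' G.scc v → b ∉ Sum.inr '' G.scc v →
      ((∃ y, b = Sum.inr y ∧ G.ancestor v y) → t1 ≠ .bwd) →
      ¬ q.sigmaOpenAux ((Sum.inl '' G.pa (G.scc v)) ∪
        ((Sum.inr '' G.pa (G.scc v)) \ (Sum.inr '' G.scc v))) u t1 := by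
  induction q with
  | nil b => intro u t1 hc hb; exact absurd hc hb
  | @cons b w c t2 hl q ih =>
    intro u t1 hc hb hD ho
    obtain ⟨⟨hcol, hnc⟩, hrest⟩ := ho
    cases t2 with
    | fwd =>
      refine ih b .fwd hc ?_ (by intro _ h; cases h) hrest
      rintro ⟨s, hs, rfl⟩
      refine hnc (fun h => h.2) ?_ ?_
      · intro hu
        have h2 := (hu.2 rfl).1
        have h3 := (hu.2 rfl).2
        obtain ⟨b', rfl⟩ := lift_anc_inr G h2
        have h2 := lift_anc_proj G h2
        have h3 := lift_anc_proj G h3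
        exact hb ⟨b', ⟨h3.trans hs.1, hs.2.trans h2⟩, rfl⟩
      · obtain ⟨x, y, hE, h | h | h⟩ := hl
        · cases h
        · obtain ⟨rfl, h⟩ := Prod.mk.inj h
          cases h
          exact Or.inl ⟨x, ⟨s, hs, hE⟩, rfl⟩
        · obtain ⟨rfl, h⟩ := Prod.mk.inj h
          cases h
          exact Or.inr ⟨⟨x, ⟨s, hs, hE⟩, rfl⟩, hb⟩
    | bwd =>
      have key : ∀ y, w = Sum.inr y → ¬ G.ancestor v y := by
        rintro y rfl hvy
        obtain ⟨x, z, hE, h | h | h⟩ := hl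
        · cases h
        · cases h
        · obtain ⟨h, rfl⟩ := Prod.mk.inj h
          cases h
          have hvz : G.ancestor v z := hvy.tail hE
          have ht : t1.headR := by
            have := hD ⟨z, rfl, hvz⟩
            cases t1 <;> simp_all [LinkType.headR]
          exact collider_contra G v z hvz (fun h => hb ⟨z, h, rfl⟩) (hcol ⟨ht, trivial⟩)
      refine ih b .bwd hc ?_ ?_ hrest
      · rintro ⟨s, hs, rfl⟩
        exact key s rfl hs.2
      · rintro ⟨y, hy, hvy⟩
        exact absurd hvy (key y hy)
    | bi =>
      obtain ⟨x, y, hE, _⟩ := hl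
      rw [hG] at hE
      exact hE

/-- Local Markov property for E-separation: the strongly connected component of `v` is
E-separated from everything outside its parent set, given that parent set. -/
theorem local_markov {V : Type} [Fintype V] (G : DMG V) (hG : G.Ebi = ∅) (v : V) :
    (Set.univ \ G.pa (G.scc v), G.scc v, G.pa (G.scc v)) ∈ G.IE := by
  rintro _ ⟨a, ⟨-, ha⟩, rfl⟩ b hb p ho
  cases p with
  | nil => obtain ⟨_, _, h⟩ := hb; cases h
  | @cons _ w _ t hl q =>
    cases t with
    | fwd =>
      refine walk_blocked G hG v q _ _ hb ?_ (by intro _ h; cases h) ho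
      rintro ⟨s, hs, rfl⟩
      obtain ⟨x, y, hE, h | h | h⟩ := hl <;> cases h
      exact ha ⟨s, hs, hE⟩
    | bwd =>
      have hw : ∀ y, w ≠ Sum.inr y := by
        rintro y rfl
        obtain ⟨x, y, hE, h | h | h⟩ := hl <;> cases h
      refine walk_blocked G hG v q _ _ hb ?_ ?_ ho
      · rintro ⟨s, _, h⟩
        exact hw s h.symm
      · rintro ⟨y, h, _⟩
        exact absurd h (hw y)
    | bi =>
      obtain ⟨x, y, hE, _⟩ := hl
      rw [hG] at hE
      exact hE

end ESepPaper
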